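/- arXiv:1905.03660 — 12 statements merged into one kernel-verified Lean document; each statement's English description precedes it below -/
import Mathlib

section
/- Let N_x ≥ 1, N_v ≥ 0, and let κ, Δt, Δv, Δx > 0 and tol ≥ 0. Let v_j ∈ ℝ (j = 0,…,N_v) be velocity nodes. For n = 0,…,N_t let f^n : ZMod N_x × {0,…,N_v} → ℝ, and suppose for each n < N_t there are shifts s_j ∈ ℤ and weights θ_j ∈ ℝ (depending on j but not on i) and values g^n : ZMod N_x × {0,…,N_v} → ℝ such that, with the semi-Lagrangian interpolant f̃^n_{i,j} := θ_j·f^n_{i−s_j+1, j} + (1−θ_j)·f^n_{i−s_j, j} (indices taken in ZMod N_x), the update rule f^{n+1}_{i,j} = (κ·f̃^n_{i,j} + Δt·g^n_{i,j})/(κ + Δt) holds, and such that the discrete-Maxwellian tolerance condition |Σ_{j=0}^{N_v} (g^n_{i,j} − f̃^n_{i,j})·φ_ℓ(v_j)·Δv| ≤ tol holds for every i ∈ ZMod N_x and every ℓ ∈ {1,2,3}. Then for every ℓ ∈ {1,2,3}: |Σ_{i∈ZMod N_x} Σ_{j=0}^{N_v} (f^{N_t}_{i,j} − f^0_{i,j})·φ_ℓ(v_j)·Δv·Δx|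 ≤ (N_t·Δt/(κ + Δt))·(N_x·Δx)·tol. -/
open Finset

/-- The 1D collision invariants: `φ_1(v) = 1`, `φ_2(v) = v`, `φ_3(v) = v²/2`. -/
noncomputable def phi : Fin 3 → ℝ → ℝ := ![fun _ => 1, fun w => w, fun w => w ^ 2 / 2]

theorem stmt_0 (Nx Nv Nt : ℕ) [NeZero Nx]
    (κ Δt Δv Δx tol : ℝ) (hκ : 0 < κ) (hΔt : 0 < Δt) (hΔv : 0 < Δv) (hΔx : 0 < Δx)
    (htol : 0 ≤ tol)
    (v : Fin (Nv + 1) → ℝ)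
    (f : ℕ → ZMod Nx → Fin (Nv + 1) → ℝ)
    (s : ℕ → Fin (Nv + 1) → ℤ) (θ : ℕ → Fin (Nv + 1) → ℝ)
    (g : ℕ → ZMod Nx → Fin (Nv + 1) → ℝ)
    (hup : ∀ n < Nt, ∀ (i : ZMod Nx) (j : Fin (Nv + 1)),
      f (n + 1) i j =
        (κ * (θ n j * f n (i - (s n j : ZMod Nx) + 1) j
            + (1 - θ n j) * f n (i - (s n j : ZMod Nx)) j)
          + Δt * g n i j) / (κ + Δt))
    (hdm : ∀ n < Nt, ∀ (i : ZMod Nx) (l : Fin 3),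
      |∑ j : Fin (Nv + 1),
          (g n i j - (θ n j * f n (i - (s n j : ZMod Nx) + 1) j
              + (1 - θ n j) * f n (i - (s n j : ZMod Nx)) j)) * phi l (v j) * Δv| ≤ tol) :
    ∀ l : Fin 3,
      |∑ i : ZMod Nx, ∑ j : Fin (Nv + 1), (f Nt i j - f 0 i j) * phi l (v j) * Δv * Δx|
        ≤ (Nt * Δt / (κ + Δt)) * ((Nx : ℝ) * Δx) * tol := by
  intro l
  have hK : 0 < κ + Δt := by positivity
  -- the mass of the interpolant equals the mass of `f n`
  have hshift : ∀ n, ∑ i : ZMod Nx, ∑ j : Fin (Nv + 1),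
      (θ n j * f n (i - (s n j : ZMod Nx) + 1) j
        + (1 - θ n j) * f n (i - (s n j : ZMod Nx)) j) * phi l (v j) * Δv * Δx
      = ∑ i : ZMod Nx, ∑ j : Fin (Nv + 1), f n i j * phi l (v j) * Δv * Δx := by
    intro n
    rw [Finset.sum_comm]
    conv_rhs => rw [Finset.sum_comm]
    refine Finset.sum_congr rfl fun j _ => ?_
    have h1 : ∑ i : ZMod Nx, f n (i - (s n j : ZMod Nx)) j = ∑ i : ZMod Nx, f n i j :=
      Equiv.sum_comp (Equiv.subRight (s n j : ZMod Nx)) (fun i => f n i j)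
    have h2 : ∑ i : ZMod Nx, f n (i - (s n j : ZMod Nx) + 1) j = ∑ i : ZMod Nx, f n i j :=
      Equiv.sum_comp ((Equiv.subRight (s n j : ZMod Nx)).trans (Equiv.addRight 1))
        (fun i => f n i j)
    simp only [← Finset.sum_mul]
    rw [Finset.sum_add_distrib, ← Finset.mul_sum, ← Finset.mul_sum, h1, h2]
    ring
  -- one time step
  have hstep : ∀ n < Nt,
      |∑ i : ZMod Nx, ∑ j : Fin (Nv + 1), (f (n + 1) i j - f n i j) * phi l (v j) * Δv * Δx|
        ≤ (Δt / (κ + Δt)) * ((Nx : ℝ) * Δx) * tol := by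
    intro n hn
    have e : ∑ i : ZMod Nx, ∑ j : Fin (Nv + 1),
          (f (n + 1) i j - f n i j) * phi l (v j) * Δv * Δx
        = (Δt / (κ + Δt)) * Δx * ∑ i : ZMod Nx, ∑ j : Fin (Nv + 1),
          (g n i j - (θ n j * f n (i - (s n j : ZMod Nx) + 1) j
              + (1 - θ n j) * f n (i - (s n j : ZMod Nx)) j)) * phi l (v j) * Δv := by
      have e1 : ∑ i : ZMod Nx, ∑ j : Fin (Nv + 1),
            (f (n + 1) i j - f n i j) * phi l (v j) * Δv * Δx
          = ∑ i : ZMod Nx, ∑ j : Fin (Nv + 1), f (n + 1) i j * phi l (v j) * Δv * Δx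
          - ∑ i : ZMod Nx, ∑ j : Fin (Nv + 1), f n i j * phi l (v j) * Δv * Δx := by
        simp only [sub_mul, Finset.sum_sub_distrib]
      rw [e1, ← hshift n]
      simp only [← Finset.sum_sub_distrib, Finset.mul_sum]
      refine Finset.sum_congr rfl fun i _ => Finset.sum_congr rfl fun j _ => ?_
      rw [hup n hn i j]
      field_simp
      ring
    rw [e, abs_mul, abs_of_nonneg (by positivity : 0 ≤ (Δt / (κ + Δt)) * Δx)]
    have hb := (Finset.abs_sum_le_sum_abs _ _).trans
      (Finset.sum_le_sum fun (i : ZMod Nx) (_ : i ∈ Finset.univ) => hdm n hn i l)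
    rw [Finset.sum_const, Finset.card_univ, ZMod.card, nsmul_eq_mul] at hb
    calc _ ≤ (Δt / (κ + Δt)) * Δx * ((Nx : ℝ) * tol) :=
          mul_le_mul_of_nonneg_left hb (by positivity)
      _ = _ := by ring
  have hind : ∀ n ≤ Nt,
      |∑ i : ZMod Nx, ∑ j : Fin (Nv + 1), (f n i j - f 0 i j) * phi l (v j) * Δv * Δx|
        ≤ (n * Δt / (κ + Δt)) * ((Nx : ℝ) * Δx) * tol := by
    intro n
    induction n with
    | zero => intro _; simp
    | succ n ih =>
      intro hn
      have a := ih (by omega)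
      have b := hstep n (by omega)
      have e : ∑ i : ZMod Nx, ∑ j : Fin (Nv + 1),
            (f (n + 1) i j - f 0 i j) * phi l (v j) * Δv * Δx
          = ∑ i : ZMod Nx, ∑ j : Fin (Nv + 1), (f (n + 1) i j - f n i j) * phi l (v j) * Δv * Δx
          + ∑ i : ZMod Nx, ∑ j : Fin (Nv + 1), (f n i j - f 0 i j) * phi l (v j) * Δv * Δx := by
        simp only [← Finset.sum_add_distrib]
        refine Finset.sum_congr rfl fun i _ => Finset.sum_congr rfl fun j _ => ?_
        ring
      rw [e]
      refine (abs_add_le _ _).trans ((add_le_add b a).trans (le_of_eq ?_))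
      push_cast
      ring
  exact hind Nt le_rfl
end

section
/- Let N_x ≥ 1, N_v ≥ 0, κ, Δt, Δv, Δx > 0. Let v_j ∈ ℝ (j = 0,…,N_v). Let f^n : ZMod N_x × {0,…,N_v} → ℝ, let s_j ∈ ℤ and θ_j ∈ ℝ depend only on j, set f̃^n_{i,j} := θ_j·f^n_{i−s_j+1, j} + (1−θ_j)·f^n_{i−s_j, j} (indices in ZMod N_x), let g^n : ZMod N_x × {0,…,N_v} → ℝ be arbitrary, and define f^{n+1}_{i,j} = (κ·f̃^n_{i,j} + Δt·g^n_{i,j})/(κ + Δt). Then for each ℓ ∈ {1,2,3} the exact identity Σ_{i,j} (f^{n+1}_{i,j} − f^n_{i,j})·φ_ℓ(v_j)·Δv·Δx = (Δt/(κ + Δt))·Σ_{i,j} (g^n_{i,j} − f̃^n_{i,j})·φ_ℓ(v_j)·Δv·Δx holds, where sums run over i ∈ ZMod N_x and j = 0,…,N_v. -/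
open Finset

theorem stmt_1 (Nx Nv : ℕ) [NeZero Nx]
    (κ Δt Δv Δx : ℝ) (hκ : 0 < κ) (hΔt : 0 < Δt) (hΔv : 0 < Δv) (hΔx : 0 < Δx)
    (v : Fin (Nv + 1) → ℝ)
    (f fnext : ZMod Nx → Fin (Nv + 1) → ℝ)
    (s : Fin (Nv + 1) → ℤ) (θ : Fin (Nv + 1) → ℝ)
    (g : ZMod Nx → Fin (Nv + 1) → ℝ)
    (hup : ∀ (i : ZMod Nx) (j : Fin (Nv + 1)),
      fnext i j =
        (κ * (θ j * f (i - (s j : ZMod Nx) + 1) j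
            + (1 - θ j) * f (i - (s j : ZMod Nx)) j)
          + Δt * g i j) / (κ + Δt)) :
    ∀ l : Fin 3,
      ∑ i : ZMod Nx, ∑ j : Fin (Nv + 1), (fnext i j - f i j) * phi l (v j) * Δv * Δx
        = (Δt / (κ + Δt)) *
          ∑ i : ZMod Nx, ∑ j : Fin (Nv + 1),
            (g i j - (θ j * f (i - (s j : ZMod Nx) + 1) j
                + (1 - θ j) * f (i - (s j : ZMod Nx)) j)) * phi l (v j) * Δv * Δx := by
  intro l
  have hk : κ + Δt ≠ 0 := by positivity
  rw [Finset.sum_comm, Finset.sum_comm (s := (Finset.univ : Finset (ZMod Nx))), Finset.mul_sum]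
  refine Finset.sum_congr rfl fun j _ => ?_
  have h1 : ∑ i : ZMod Nx, f (i - (s j : ZMod Nx) + 1) j = ∑ i : ZMod Nx, f i j :=
    Fintype.sum_equiv ((Equiv.subRight (s j : ZMod Nx)).trans (Equiv.addRight 1)) _ _
      (fun i => by simp)
  have h2 : ∑ i : ZMod Nx, f (i - (s j : ZMod Nx)) j = ∑ i : ZMod Nx, f i j :=
    Fintype.sum_equiv (Equiv.subRight (s j : ZMod Nx)) _ _ (fun i => by simp)
  have h3 : ∑ i : ZMod Nx, (θ j * f (i - (s j : ZMod Nx) + 1) j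
      + (1 - θ j) * f (i - (s j : ZMod Nx)) j - f i j) = 0 := by
    rw [Finset.sum_sub_distrib, Finset.sum_add_distrib, ← Finset.mul_sum, ← Finset.mul_sum, h1, h2]
    ring
  rw [← sub_eq_zero, Finset.mul_sum, ← Finset.sum_sub_distrib,
    ← zero_mul (phi l (v j) * Δv * Δx), ← h3, Finset.sum_mul]
  refine Finset.sum_congr rfl fun i _ => ?_
  rw [hup]
  field_simp
  ring
end

section
/- Let s ≥ 1, let b_1,…,b_s ∈ ℝ with b_s > 0, and let κ, Δt, Δv, Δx > 0, tol ≥ 0, N_x ≥ 1, N_v ≥ 0, v_j ∈ ℝ (j = 0,…,N_v). Let f^n, f*, f^{n+1} and, for k = 1,…,s−1, stage values f^{(k)} and M^{(k)}, and a final-stage value M^{(s)}, all be functions ZMod N_x × {0,…,N_v} → ℝ. Assume: (i) Σ_{i,j} f*_{i,j}·φ_ℓ(v_j)·Δv·Δx = Σ_{i,j} f^n_{i,j}·φ_ℓ(v_j)·Δv·Δx for ℓ = 1,2,3 (conservativity of the corrected convection step under periodicity); (ii) for every i and every ℓ ∈ {1,2,3}, |Σ_j (M^{(k)}_{i,j}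 − f^{(k)}_{i,j})·φ_ℓ(v_j)·Δv| ≤ tol for k = 1,…,s−1, and |Σ_j (M^{(s)}_{i,j} − f*_{i,j})·φ_ℓ(v_j)·Δv| ≤ tol; (iii) the update f^{n+1}_{i,j} = f*_{i,j} + (Δt/κ)·[Σ_{k=1}^{s−1} b_k·(M^{(k)}_{i,j} − f^{(k)}_{i,j}) + b_s·(M^{(s)}_{i,j} − f^{n+1}_{i,j})] holds for all i, j. Then for every ℓ ∈ {1,2,3}: |Σ_{i,j} (f^{n+1}_{i,j} − f^n_{i,j})·φ_ℓ(v_j)·Δv·Δx| ≤ (Σ_{k=1}^{s−1} |b_k| + |b_s|)·(Δt/(κ + b_s·Δt))·(N_x·Δx)·tol. -/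
open Finset

theorem stmt_3 (s : ℕ) (hs : 1 ≤ s) (b : ℕ → ℝ) (hbs : 0 < b s)
    (κ Δt Δv Δx tol : ℝ) (hκ : 0 < κ) (hΔt : 0 < Δt) (hΔv : 0 < Δv) (hΔx : 0 < Δx)
    (htol : 0 ≤ tol)
    (Nx Nv : ℕ) [NeZero Nx] (v : Fin (Nv + 1) → ℝ)
    (f fstar fnext : ZMod Nx → Fin (Nv + 1) → ℝ)
    (fstage Mstage : ℕ → ZMod Nx → Fin (Nv + 1) → ℝ)
    (Ms : ZMod Nx → Fin (Nv + 1) → ℝ)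
    (hconv : ∀ l : Fin 3,
      ∑ i : ZMod Nx, ∑ j : Fin (Nv + 1), fstar i j * phi l (v j) * Δv * Δx
        = ∑ i : ZMod Nx, ∑ j : Fin (Nv + 1), f i j * phi l (v j) * Δv * Δx)
    (hstagetol : ∀ (i : ZMod Nx) (l : Fin 3), ∀ k ∈ Finset.Ico 1 s,
      |∑ j : Fin (Nv + 1), (Mstage k i j - fstage k i j) * phi l (v j) * Δv| ≤ tol)
    (hlasttol : ∀ (i : ZMod Nx) (l : Fin 3),
      |∑ j : Fin (Nv + 1), (Ms i j - fstar i j) * phi l (v j) * Δv| ≤ tol)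
    (hup : ∀ (i : ZMod Nx) (j : Fin (Nv + 1)),
      fnext i j = fstar i j + (Δt / κ) *
        ((∑ k ∈ Finset.Ico 1 s, b k * (Mstage k i j - fstage k i j))
          + b s * (Ms i j - fnext i j))) :
    ∀ l : Fin 3,
      |∑ i : ZMod Nx, ∑ j : Fin (Nv + 1), (fnext i j - f i j) * phi l (v j) * Δv * Δx|
        ≤ ((∑ k ∈ Finset.Ico 1 s, |b k|) + |b s|) * (Δt / (κ + b s * Δt))
            * ((Nx : ℝ) * Δx) * tol := by
  intro l
  have hden : 0 < κ + b s * Δt := by positivity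
  set c : ℝ := Δt / (κ + b s * Δt) with hc
  have hc0 : 0 ≤ c := by positivity
  have key : ∀ i j, fnext i j - fstar i j = c *
      ((∑ k ∈ Finset.Ico 1 s, b k * (Mstage k i j - fstage k i j))
        + b s * (Ms i j - fstar i j)) := by
    intro i j
    have h := hup i j
    generalize (∑ k ∈ Finset.Ico 1 s, b k * (Mstage k i j - fstage k i j)) = S at h ⊢
    rw [hc, div_mul_eq_mul_div, eq_div_iff hden.ne']
    rw [div_mul_eq_mul_div, ← sub_eq_iff_eq_add', eq_div_iff hκ.ne'] at h
    linear_combination h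
  have cell : ∀ i, ∑ j, (fnext i j - fstar i j) * phi l (v j) * Δv * Δx =
      c * ((∑ k ∈ Finset.Ico 1 s, b k *
        ∑ j, (Mstage k i j - fstage k i j) * phi l (v j) * Δv)
        + b s * ∑ j, (Ms i j - fstar i j) * phi l (v j) * Δv) * Δx := by
    intro i
    simp_rw [Finset.mul_sum]
    rw [Finset.sum_comm, ← Finset.sum_add_distrib, Finset.mul_sum, Finset.sum_mul]
    refine Finset.sum_congr rfl fun j _ => ?_
    have : ∑ k ∈ Finset.Ico 1 s, b k * ((Mstage k i j - fstage k i j) * phi l (v j) * Δv)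
        = (∑ k ∈ Finset.Ico 1 s, b k * (Mstage k i j - fstage k i j)) * (phi l (v j) * Δv) := by
      rw [Finset.sum_mul]
      exact Finset.sum_congr rfl fun k _ => by ring
    rw [key, this]
    ring
  have tot : ∑ i, ∑ j, (fnext i j - f i j) * phi l (v j) * Δv * Δx =
      ∑ i, ∑ j, (fnext i j - fstar i j) * phi l (v j) * Δv * Δx := by
    have h := hconv l
    simp only [sub_mul, Finset.sum_sub_distrib]
    rw [h]
  have bound : ∀ i, |∑ j, (fnext i j - fstar i j) * phi l (v j) * Δv * Δx| ≤
      c * (((∑ k ∈ Finset.Ico 1 s, |b k|) + |b s|) * tol) * Δx := by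
    intro i
    rw [cell, abs_mul, abs_mul, abs_of_nonneg hc0, abs_of_pos hΔx]
    gcongr
    rw [add_mul, Finset.sum_mul]
    refine (abs_add_le _ _).trans (add_le_add ?_ ?_)
    · refine (Finset.abs_sum_le_sum_abs _ _).trans (Finset.sum_le_sum fun k hk => ?_)
      rw [abs_mul]
      exact mul_le_mul_of_nonneg_left (hstagetol i l k hk) (abs_nonneg _)
    · rw [abs_mul]
      exact mul_le_mul_of_nonneg_left (hlasttol i l) (abs_nonneg _)
  rw [tot]
  refine (Finset.abs_sum_le_sum_abs _ _).trans
    ((Finset.sum_le_sum fun i _ => bound i).trans (le_of_eq ?_))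
  rw [Finset.sum_const, Finset.card_univ, ZMod.card, nsmul_eq_mul]
  ring
end

section
/- Let s ≥ 1, b_1,…,b_s ∈ ℝ with b_s > 0, and let κ, Δt, Δv, Δx > 0, tol ≥ 0, N_x ≥ 1, N_v ≥ 0, v_j ∈ ℝ (j = 0,…,N_v). For n = 0,…,N_t let f^n : ZMod N_x × {0,…,N_v} → ℝ, and suppose that for every n < N_t there exist data f*^n, f^{(k),n}, M^{(k),n} (k = 1,…,s−1) and M^{(s),n} on ZMod N_x × {0,…,N_v} such that: (i) Σ_{i,j} f*^n_{i,j}·φ_ℓ(v_j)·Δv·Δx = Σ_{i,j} f^n_{i,j}·φ_ℓ(v_j)·Δv·Δx for ℓ = 1,2,3; (ii) for every i and every ℓ ∈ {1,2,3}, |Σ_j (M^{(k),n}_{i,j} − f^{(k),n}_{i,j})·φ_ℓ(v_j)·Δv| ≤ tol for k = 1,…,s−1, and |Σ_j (M^{(s),n}_{i,j} − f*^n_{i,j})·φ_ℓ(v_j)·Δv| ≤ tol; (iii) f^{n+1}_{i,j} = f*^n_{i,j} + (Δt/κ)·[Σ_{k=1}^{s−1} b_k·(M^{(k),n}_{i,j}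 − f^{(k),n}_{i,j}) + b_s·(M^{(s),n}_{i,j} − f^{n+1}_{i,j})]. Then for every ℓ ∈ {1,2,3}: |Σ_{i,j} (f^{N_t}_{i,j} − f^0_{i,j})·φ_ℓ(v_j)·Δv·Δx| ≤ (Σ_{k=1}^{s−1} |b_k| + |b_s|)·(N_t·Δt/(κ + b_s·Δt))·(N_x·Δx)·tol. -/
open Finset

theorem stmt_4 (s : ℕ) (hs : 1 ≤ s) (b : ℕ → ℝ) (hbs : 0 < b s)
    (κ Δt Δv Δx tol : ℝ) (hκ : 0 < κ) (hΔt : 0 < Δt) (hΔv : 0 < Δv) (hΔx : 0 < Δx)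
    (htol : 0 ≤ tol)
    (Nx Nv Nt : ℕ) [NeZero Nx] (v : Fin (Nv + 1) → ℝ)
    (f : ℕ → ZMod Nx → Fin (Nv + 1) → ℝ)
    (hstep : ∀ n < Nt,
      ∃ (fstar : ZMod Nx → Fin (Nv + 1) → ℝ)
        (fstage Mstage : ℕ → ZMod Nx → Fin (Nv + 1) → ℝ)
        (Ms : ZMod Nx → Fin (Nv + 1) → ℝ),
        (∀ l : Fin 3,
          ∑ i : ZMod Nx, ∑ j : Fin (Nv + 1), fstar i j * phi l (v j) * Δv * Δx
            = ∑ i : ZMod Nx, ∑ j : Fin (Nv + 1), f n i j * phi l (v j) * Δv * Δx) ∧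
        (∀ (i : ZMod Nx) (l : Fin 3), ∀ k ∈ Finset.Ico 1 s,
          |∑ j : Fin (Nv + 1), (Mstage k i j - fstage k i j) * phi l (v j) * Δv| ≤ tol) ∧
        (∀ (i : ZMod Nx) (l : Fin 3),
          |∑ j : Fin (Nv + 1), (Ms i j - fstar i j) * phi l (v j) * Δv| ≤ tol) ∧
        (∀ (i : ZMod Nx) (j : Fin (Nv + 1)),
          f (n + 1) i j = fstar i j + (Δt / κ) *
            ((∑ k ∈ Finset.Ico 1 s, b k * (Mstage k i j - fstage k i j))
              + b s * (Ms i j - f (n + 1) i j)))) :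
    ∀ l : Fin 3,
      |∑ i : ZMod Nx, ∑ j : Fin (Nv + 1), (f Nt i j - f 0 i j) * phi l (v j) * Δv * Δx|
        ≤ ((∑ k ∈ Finset.Ico 1 s, |b k|) + |b s|) * (Nt * Δt / (κ + b s * Δt))
            * ((Nx : ℝ) * Δx) * tol := by
  intro l
  have hD : 0 < κ + b s * Δt := by positivity
  have hbsabs : |b s| = b s := abs_of_pos hbs
  have key : ∀ n < Nt,
      |(∑ i : ZMod Nx, ∑ j : Fin (Nv + 1), f (n + 1) i j * phi l (v j) * Δv * Δx)
        - ∑ i : ZMod Nx, ∑ j : Fin (Nv + 1), f n i j * phi l (v j) * Δv * Δx|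
      ≤ ((∑ k ∈ Finset.Ico 1 s, |b k|) + |b s|) * (Δt / (κ + b s * Δt))
            * ((Nx : ℝ) * Δx) * tol := by
    intro n hn
    obtain ⟨fs, fk, Mk, Ms, h1, h2, h3, h4⟩ := hstep n hn
    rw [← h1 l, ← Finset.sum_sub_distrib]
    have hrow : ∀ i : ZMod Nx,
        |(∑ j : Fin (Nv + 1), f (n + 1) i j * phi l (v j) * Δv * Δx)
          - ∑ j : Fin (Nv + 1), fs i j * phi l (v j) * Δv * Δx|
        ≤ (Δt / (κ + b s * Δt)) * Δx * (((∑ k ∈ Finset.Ico 1 s, |b k|) + |b s|) * tol) := by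
      intro i
      have hsolve : ∀ j, f (n + 1) i j - fs i j = (Δt / (κ + b s * Δt)) *
          ((∑ k ∈ Finset.Ico 1 s, b k * (Mk k i j - fk k i j)) + b s * (Ms i j - fs i j)) := by
        intro j
        have h := h4 i j
        generalize (∑ k ∈ Finset.Ico 1 s, b k * (Mk k i j - fk k i j)) = S at h ⊢
        generalize f (n + 1) i j = x at h ⊢
        have hx : κ * x = κ * fs i j + Δt * (S + b s * (Ms i j - x)) := by
          have : κ * x = κ * _ := congrArg (fun y => κ * y) h
          rw [this]
          field_simp
        rw [div_mul_eq_mul_div, eq_div_iff hD.ne']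
        linear_combination hx
      have heq : (∑ j : Fin (Nv + 1), f (n + 1) i j * phi l (v j) * Δv * Δx)
          - ∑ j : Fin (Nv + 1), fs i j * phi l (v j) * Δv * Δx
          = (Δt / (κ + b s * Δt)) * Δx *
            ((∑ k ∈ Finset.Ico 1 s,
                b k * ∑ j : Fin (Nv + 1), (Mk k i j - fk k i j) * phi l (v j) * Δv)
              + b s * ∑ j : Fin (Nv + 1), (Ms i j - fs i j) * phi l (v j) * Δv) := by
        simp_rw [Finset.mul_sum]
        rw [Finset.sum_comm, ← Finset.sum_sub_distrib, ← Finset.sum_add_distrib, Finset.mul_sum]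
        refine Finset.sum_congr rfl fun j _ => ?_
        have e : (∑ k ∈ Finset.Ico 1 s, b k * ((Mk k i j - fk k i j) * phi l (v j) * Δv))
            = (∑ k ∈ Finset.Ico 1 s, b k * (Mk k i j - fk k i j)) * (phi l (v j) * Δv) := by
          rw [Finset.sum_mul]
          exact Finset.sum_congr rfl fun k _ => by ring
        rw [e]
        linear_combination (phi l (v j) * Δv * Δx) * hsolve j
      rw [heq, abs_mul, abs_of_nonneg (by positivity : 0 ≤ Δt / (κ + b s * Δt) * Δx)]
      refine mul_le_mul_of_nonneg_left ?_ (by positivity)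
      refine (abs_add_le _ _).trans ?_
      rw [add_mul, Finset.sum_mul]
      refine add_le_add ((Finset.abs_sum_le_sum_abs _ _).trans
        (Finset.sum_le_sum fun k hk => ?_)) ?_
      · rw [abs_mul]
        exact mul_le_mul_of_nonneg_left (h2 i l k hk) (abs_nonneg _)
      · rw [abs_mul]
        exact mul_le_mul_of_nonneg_left (h3 i l) (abs_nonneg _)
    refine (Finset.abs_sum_le_sum_abs _ _).trans
      ((Finset.sum_le_sum fun i _ => hrow i).trans (le_of_eq ?_))
    rw [Finset.sum_const, Finset.card_univ, ZMod.card, nsmul_eq_mul]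
    ring
  have ind : ∀ m ≤ Nt,
      |(∑ i : ZMod Nx, ∑ j : Fin (Nv + 1), f m i j * phi l (v j) * Δv * Δx)
        - ∑ i : ZMod Nx, ∑ j : Fin (Nv + 1), f 0 i j * phi l (v j) * Δv * Δx|
      ≤ (m : ℝ) * (((∑ k ∈ Finset.Ico 1 s, |b k|) + |b s|) * (Δt / (κ + b s * Δt))
            * ((Nx : ℝ) * Δx) * tol) := by
    intro m
    induction m with
    | zero => intro _; simp
    | succ m ih =>
      intro hm
      refine (abs_sub_le _ (∑ i : ZMod Nx, ∑ j : Fin (Nv + 1),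
        f m i j * phi l (v j) * Δv * Δx) _).trans ?_
      have := ih (by omega)
      have := key m (by omega)
      push_cast
      linarith
  have h := ind Nt le_rfl
  simp_rw [sub_mul, Finset.sum_sub_distrib]
  refine h.trans (le_of_eq ?_)
  ring
end

section
/- Let κ, Δt > 0, L > 0, tol ≥ 0, σ ≥ 1, and let b_1,…,b_σ ∈ ℝ with b_σ > 0. Set B := (Σ_{k=1}^{σ−1}|b_k| + |b_σ|)·(Δt/(κ + b_σ·Δt))·L·tol and D := ((2/3)·Δt/(κ + (2/3)·Δt))·L·tol. Let N_t ≥ 2 and let m^0, m^1, …, m^{N_t} ∈ ℝ satisfy: (i) |m^{k+1} − m^k| ≤ B for k = 0, 1 (startup steps); (ii) for every n with 2 ≤ n + 1 ≤ N_t there is δ^n ∈ ℝ with |δ^n| ≤ D and m^{n+1} = (4/3)·m^n − (1/3)·m^{n−1} + δ^n. Then |m^{N_t} − m^0| ≤ (3/2)·[(N_t − 2)·D + 2·B]. -/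
theorem stmt_5 (κ Δt L tol : ℝ) (hκ : 0 < κ) (hΔt : 0 < Δt) (hL : 0 < L) (htol : 0 ≤ tol)
    (σ : ℕ) (hσ : 1 ≤ σ) (b : ℕ → ℝ) (hbσ : 0 < b σ)
    (B D : ℝ)
    (hB : B = ((∑ k ∈ Finset.Ico 1 σ, |b k|) + |b σ|) * (Δt / (κ + b σ * Δt)) * L * tol)
    (hD : D = ((2 / 3) * Δt / (κ + (2 / 3) * Δt)) * L * tol)
    (Nt : ℕ) (hNt : 2 ≤ Nt) (m : ℕ → ℝ)
    (hstart : ∀ k < 2, |m (k + 1) - m k| ≤ B)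
    (hrec : ∀ n : ℕ, 2 ≤ n + 1 → n + 1 ≤ Nt →
      ∃ δ : ℝ, |δ| ≤ D ∧ m (n + 1) = (4 / 3) * m n - (1 / 3) * m (n - 1) + δ) :
    |m Nt - m 0| ≤ (3 / 2) * (((Nt : ℝ) - 2) * D + 2 * B) := by
  have h0 := hstart 0 (by norm_num)
  have h1 := hstart 1 (by norm_num)
  norm_num at h0 h1
  have hB0 : 0 ≤ B := le_trans (abs_nonneg _) h0
  have hD0 : 0 ≤ D := by
    obtain ⟨δ, hδ, -⟩ := hrec 1 (by norm_num) (by omega)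
    exact le_trans (abs_nonneg _) hδ
  rw [abs_le] at h0 h1
  have key : ∀ k : ℕ, k + 2 ≤ Nt →
      |m (k + 2) - m 0| ≤ (3 / 2) * ((k : ℝ) * D + 2 * B) ∧
      |m (k + 2) - (1 / 3) * m (k + 1) - (2 / 3) * m 0| ≤ (k : ℝ) * D + 2 * B := by
    intro k
    induction k with
    | zero =>
      intro _
      norm_num
      constructor <;> rw [abs_le] <;> constructor <;> linarith [h0.1, h0.2, h1.1, h1.2]
    | succ k ih =>
      intro hk
      obtain ⟨i1, i2⟩ := ih (by omega)
      obtain ⟨δ, hδ, hm⟩ := hrec (k + 2) (by omega) (by omega)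
      have e1 : k + 2 - 1 = k + 1 := by omega
      rw [e1] at hm
      have e2 : k + 1 + 2 = k + 2 + 1 := by omega
      have e3 : k + 1 + 1 = k + 2 := by omega
      rw [e2, e3, hm]
      push_cast
      rw [abs_le] at i1 i2 hδ
      constructor <;> rw [abs_le] <;> constructor <;> linarith [i1.1, i1.2, i2.1, i2.2, hδ.1, hδ.2]
  obtain ⟨k, rfl⟩ := Nat.exists_eq_add_of_le' hNt
  have := (key k le_rfl).1
  push_cast
  rw [add_sub_cancel_right]
  exact this
end

section
/- Let κ, Δt > 0, L > 0, tol ≥ 0, σ ≥ 1, and let b_1,…,b_σ ∈ ℝ with b_σ > 0. Set B := (Σ_{k=1}^{σ−1}|b_k| + |b_σ|)·(Δt/(κ + b_σ·Δt))·L·tol and D := ((6/11)·Δt/(κ + (6/11)·Δt))·L·tol. Let N_t ≥ 3 and let m^0, m^1, …, m^{N_t} ∈ ℝ satisfy: (i) |m^{k+1} − m^k| ≤ B for k = 0, 1, 2 (startup steps); (ii) for every n with 3 ≤ n + 1 ≤ N_t there is δ^n ∈ ℝ with |δ^n| ≤ D and m^{n+1} = (18/11)·m^n − (9/11)·m^{n−1}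 + (2/11)·m^{n−2} + δ^n. Then |m^{N_t} − m^0| ≤ (146/11)·[(N_t − 3)·D + 3·B]. -/
theorem stmt_6 (κ Δt L tol : ℝ) (hκ : 0 < κ) (hΔt : 0 < Δt) (hL : 0 < L) (htol : 0 ≤ tol)
    (σ : ℕ) (hσ : 1 ≤ σ) (b : ℕ → ℝ) (hbσ : 0 < b σ)
    (B D : ℝ)
    (hB : B = ((∑ k ∈ Finset.Ico 1 σ, |b k|) + |b σ|) * (Δt / (κ + b σ * Δt)) * L * tol)
    (hD : D = ((6 / 11) * Δt / (κ + (6 / 11) * Δt)) * L * tol)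
    (Nt : ℕ) (hNt : 3 ≤ Nt) (m : ℕ → ℝ)
    (hstart : ∀ k < 3, |m (k + 1) - m k| ≤ B)
    (hrec : ∀ n : ℕ, 3 ≤ n + 1 → n + 1 ≤ Nt →
      ∃ δ : ℝ, |δ| ≤ D ∧
        m (n + 1) = (18 / 11) * m n - (9 / 11) * m (n - 1) + (2 / 11) * m (n - 2) + δ) :
    |m Nt - m 0| ≤ (146 / 11) * (((Nt : ℝ) - 3) * D + 3 * B) := by
  have h0 := abs_le.mp (hstart 0 (by norm_num))
  have h1 := abs_le.mp (hstart 1 (by norm_num))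
  have h2 := abs_le.mp (hstart 2 (by norm_num))
  norm_num at h0 h1 h2
  obtain ⟨h0a, h0b⟩ := h0
  obtain ⟨h1a, h1b⟩ := h1
  obtain ⟨h2a, h2b⟩ := h2
  have hB0 : 0 ≤ B := le_trans (abs_nonneg _) (hstart 0 (by norm_num))
  have hD0 : 0 ≤ D := by
    obtain ⟨δ, hδ, _⟩ := hrec 2 (by norm_num) hNt
    exact le_trans (abs_nonneg _) hδ
  have key : ∀ k : ℕ, k + 3 ≤ Nt →
      (|(m (k + 3) - m 0) - 7 / 11 * (m (k + 2) - m 0) + 2 / 11 * (m (k + 1) - m 0)|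
        ≤ 21 / 11 * B + k * D) ∧
      |m (k + 3) - m 0| ≤ 21 / 2 * B + 11 / 2 * (k * D) ∧
      |m (k + 2) - m 0| ≤ 21 / 2 * B + 11 / 2 * (k * D) := by
    intro k
    induction k with
    | zero =>
      intro _
      simp only [abs_le]
      norm_num
      refine ⟨⟨?_, ?_⟩, ⟨?_, ?_⟩, ?_, ?_⟩ <;> linarith
    | succ k ih =>
      intro hk
      obtain ⟨hJ, he, hf⟩ := ih (by omega)
      obtain ⟨δ, hδ, hm⟩ := hrec (k + 3) (by omega) (by omega)
      have e1 : k + 3 - 1 = k + 2 := by omega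
      have e2 : k + 3 - 2 = k + 1 := by omega
      rw [e1, e2] at hm
      have e3 : k + 1 + 3 = k + 3 + 1 := by omega
      have e4 : k + 1 + 2 = k + 3 := by omega
      have e5 : k + 1 + 1 = k + 2 := by omega
      rw [e3, e4, e5]
      push_cast
      have hkD : (0 : ℝ) ≤ k * D := by positivity
      have hx : ((k : ℝ) + 1) * D = k * D + D := by ring
      rw [hx]
      generalize (k : ℝ) * D = X at *
      rw [abs_le] at *
      obtain ⟨hJ1, hJ2⟩ := hJ
      obtain ⟨he1, he2⟩ := he
      obtain ⟨hf1, hf2⟩ := hf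
      obtain ⟨hd1, hd2⟩ := hδ
      refine ⟨⟨?_, ?_⟩, abs_le.mpr ⟨?_, ?_⟩, abs_le.mpr ⟨?_, ?_⟩⟩ <;> linarith
  obtain ⟨j, rfl⟩ := Nat.exists_eq_add_of_le' hNt
  have hj := (key j le_rfl).2.1
  have hjD : (0 : ℝ) ≤ j * D := by positivity
  push_cast
  have hx : ((j : ℝ) + 3 - 3) * D = j * D := by ring
  rw [hx]
  linarith
end

section
/- Let ρ > 0, T > 0, U ∈ ℝ, and define the 1D Maxwellian M(v) := (ρ/√(2πT))·exp(−(v−U)²/(2T)). Let f : ℝ → ℝ be measurable with f(v) > 0 for almost every v, and assume f, v·f(v), v²·f(v), f·ln f, and M·ln f are all Lebesgue integrable on ℝ. Assume the moment matching conditions ∫_ℝ f(v) dv = ρ, ∫_ℝ v·f(v) dv = ρ·U, and ∫_ℝ v²·f(v) dv = ρ·(T + U²). Then ∫_ℝ (M(v) − f(v))·ln f(v) dv ≤ 0. -/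
open MeasureTheory Real

theorem stmt_8 (ρ T U : ℝ) (hρ : 0 < ρ) (hT : 0 < T)
    (M : ℝ → ℝ)
    (hM : ∀ v : ℝ, M v = ρ / Real.sqrt (2 * Real.pi * T) * Real.exp (-(v - U) ^ 2 / (2 * T)))
    (f : ℝ → ℝ) (hf_meas : Measurable f)
    (hf_pos : ∀ᵐ v : ℝ, 0 < f v)
    (hf_int : Integrable f)
    (hvf_int : Integrable (fun v : ℝ => v * f v))
    (hv2f_int : Integrable (fun v : ℝ => v ^ 2 * f v))
    (hflogf_int : Integrable (fun v : ℝ => f v * Real.log (f v)))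
    (hMlogf_int : Integrable (fun v : ℝ => M v * Real.log (f v)))
    (hmass : (∫ v : ℝ, f v) = ρ)
    (hmom : (∫ v : ℝ, v * f v) = ρ * U)
    (henergy : (∫ v : ℝ, v ^ 2 * f v) = ρ * (T + U ^ 2)) :
    (∫ v : ℝ, (M v - f v) * Real.log (f v)) ≤ 0 := by
  have hC : 0 < ρ / Real.sqrt (2 * Real.pi * T) := by positivity
  have hMpos : ∀ v, 0 < M v := fun v => by rw [hM]; positivity
  -- comparison with the Gaussian density
  obtain ⟨t, ht⟩ : ∃ t : NNReal, (t : ℝ) = T := ⟨⟨T, hT.le⟩, rfl⟩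
  have ht0 : t ≠ 0 := by
    rintro rfl
    simp at ht
    linarith
  have hMg : ∀ v, M v = ρ * ProbabilityTheory.gaussianPDFReal U t v := fun v => by
    rw [hM, ProbabilityTheory.gaussianPDFReal_def, ht]
    ring
  have hM0 : Integrable M := by
    rw [funext hMg]
    exact (ProbabilityTheory.integrable_gaussianPDFReal U t).const_mul ρ
  have hM0' : ∫ v, M v = ρ := by
    simp_rw [hMg]
    rw [integral_const_mul, ProbabilityTheory.integral_gaussianPDFReal_eq_one U ht0, mul_one]
  have hM2' : ∫ v, (v - U) ^ 2 * M v = ρ * T := by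
    have h := ProbabilityTheory.variance_fun_id_gaussianReal (μ := U) (v := t)
    rw [ProbabilityTheory.variance_eq_integral (by fun_prop),
      ProbabilityTheory.integral_id_gaussianReal,
      ProbabilityTheory.integral_gaussianReal_eq_integral_smul ht0, ht] at h
    rw [← h, ← integral_const_mul]
    congr 1
    ext v
    rw [hMg, smul_eq_mul]
    ring
  have hM2 : Integrable (fun v => (v - U) ^ 2 * M v) := by
    apply Integrable.of_integral_ne_zero
    rw [hM2']
    positivity
  have hexp : (fun v => (v - U) ^ 2 * f v)
      = fun v => v ^ 2 * f v - 2 * U * (v * f v) + U ^ 2 * f v := by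
    ext v
    ring
  have hf2 : Integrable (fun v => (v - U) ^ 2 * f v) := by
    rw [hexp]
    exact (hv2f_int.sub (hvf_int.const_mul _)).add (hf_int.const_mul _)
  have hf2' : ∫ v, (v - U) ^ 2 * f v = ρ * T := by
    have j : Integrable (fun v => v ^ 2 * f v - 2 * U * (v * f v)) :=
      hv2f_int.sub (hvf_int.const_mul _)
    rw [hexp, integral_add j (hf_int.const_mul _),
      integral_sub hv2f_int (hvf_int.const_mul _), integral_const_mul, integral_const_mul,
      hmass, hmom, henergy]
    ring
  set a := Real.log (ρ / Real.sqrt (2 * Real.pi * T)) with ha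
  have hlogM : ∀ v, Real.log (M v) = a - (2 * T)⁻¹ * (v - U) ^ 2 := fun v => by
    rw [hM, Real.log_mul hC.ne' (Real.exp_pos _).ne', Real.log_exp]
    ring
  have hR : (fun v => (M v - f v) * Real.log (M v))
      = fun v => a * (M v - f v) - (2 * T)⁻¹ * ((v - U) ^ 2 * M v - (v - U) ^ 2 * f v) := by
    ext v
    rw [hlogM]
    ring
  have i1 : Integrable (fun v => a * (M v - f v)) := (hM0.sub hf_int).const_mul _
  have i2 : Integrable (fun v => (2 * T)⁻¹ * ((v - U) ^ 2 * M v - (v - U) ^ 2 * f v)) :=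
    (hM2.sub hf2).const_mul _
  have hRint : Integrable (fun v => (M v - f v) * Real.log (M v)) := by
    rw [hR]
    exact i1.sub i2
  have hR0 : ∫ v, (M v - f v) * Real.log (M v) = 0 := by
    rw [hR, integral_sub i1 i2, integral_const_mul, integral_const_mul,
      integral_sub hM0 hf_int, integral_sub hM2 hf2, hM0', hM2', hf2', hmass]
    ring
  have hL : Integrable (fun v => (M v - f v) * Real.log (f v)) := by
    simp_rw [sub_mul]
    exact hMlogf_int.sub hflogf_int
  rw [← hR0]
  refine integral_mono_ae hL hRint ?_
  filter_upwards [hf_pos] with v hv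
  rcases le_total (M v) (f v) with h | h
  · have := Real.log_le_log (hMpos v) h
    nlinarith
  · have := Real.log_le_log hv h
    nlinarith
end

section
/- Let c_1, c_2 ∈ ℝ with c_1 ≠ 1, c_1 ≠ 1/3, c_2 ≠ 1, and c_2 ≠ c_1. Define b_2 = (3c_1 − 1)/(6·(c_2 − c_1)·(c_2 − 1)), b_3 = (6c_1c_2 − 3c_1 − 3c_2 + 2)/(6·(c_2 − 1)·(c_1 − 1)), b_1 = 1 − b_2 − b_3, γ_2 = (6c_1²c_2 − 4c_1c_2 − c_1 + c_2)/(2·(3c_1 − 1)·(c_1 − 1)), and consider the 3-stage Butcher tableau with abscissae c = (c_1, c_2, 1), weights b = (b_1, b_2, b_3), and matrix A with rows (c_1, 0, 0), (c_2 − γ_2, γ_2, 0), (b_1, b_2, b_3). Then the third-order conditions hold: Σ_{i=1}^3 b_i = 1, Σ_{i=1}^3 b_i·c_i = 1/2, Σ_{i=1}^3 b_i·c_i² = 1/3, and Σ_{i,j=1}^3 b_i·a_{ij}·c_j = 1/6. -/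
open Finset

theorem stmt_12 (c₁ c₂ : ℝ) (h₁ : c₁ ≠ 1) (h₂ : c₁ ≠ 1 / 3) (h₃ : c₂ ≠ 1) (h₄ : c₂ ≠ c₁)
    (b₁ b₂ b₃ γ₂ : ℝ)
    (hb₂ : b₂ = (3 * c₁ - 1) / (6 * (c₂ - c₁) * (c₂ - 1)))
    (hb₃ : b₃ = (6 * c₁ * c₂ - 3 * c₁ - 3 * c₂ + 2) / (6 * (c₂ - 1) * (c₁ - 1)))
    (hb₁ : b₁ = 1 - b₂ - b₃)
    (hγ₂ : γ₂ = (6 * c₁ ^ 2 * c₂ - 4 * c₁ * c₂ - c₁ + c₂) / (2 * (3 * c₁ - 1) * (c₁ - 1)))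
    (c : Fin 3 → ℝ) (hc : c = ![c₁, c₂, 1])
    (b : Fin 3 → ℝ) (hb : b = ![b₁, b₂, b₃])
    (A : Fin 3 → Fin 3 → ℝ)
    (hA : A = ![![c₁, 0, 0], ![c₂ - γ₂, γ₂, 0], ![b₁, b₂, b₃]]) :
    (∑ i : Fin 3, b i = 1) ∧
    (∑ i : Fin 3, b i * c i = 1 / 2) ∧
    (∑ i : Fin 3, b i * c i ^ 2 = 1 / 3) ∧
    (∑ i : Fin 3, ∑ j : Fin 3, b i * A i j * c j = 1 / 6) := by
  have e1 : c₁ - 1 ≠ 0 := sub_ne_zero.mpr h₁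
  have e2 : 3 * c₁ - 1 ≠ 0 := fun h => h₂ (by linarith)
  have e3 : c₂ - 1 ≠ 0 := sub_ne_zero.mpr h₃
  have e4 : c₂ - c₁ ≠ 0 := sub_ne_zero.mpr h₄
  have k1 : b₁ * c₁ + b₂ * c₂ + b₃ = 1 / 2 := by
    rw [hb₁, hb₂, hb₃]
    field_simp
    ring
  have k2 : b₁ * c₁ ^ 2 + b₂ * c₂ ^ 2 + b₃ = 1 / 3 := by
    rw [hb₁, hb₂, hb₃]
    field_simp
    ring
  have k3 : b₂ * (c₂ - c₁) * (γ₂ - c₂) = b₃ / 2 - 1 / 6 := by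
    rw [hb₂, hb₃, hγ₂]
    field_simp
    ring
  subst hc hb hA
  refine ⟨?_, ?_, ?_, ?_⟩
  · simp [Fin.sum_univ_three]
    linarith
  · simp [Fin.sum_univ_three]
    linarith
  · simp [Fin.sum_univ_three]
    linarith
  · simp [Fin.sum_univ_three]
    linear_combination k2 + k3 + b₃ * k1
end

section
/- Let Δx > 0 and k ∈ ℝ with |k·Δx| < 2π. Define sinc(t) = sin(t)/t for t ≠ 0 and sinc(0) = 1, and define û : ℝ → ℂ by û(x) = exp(i·k·x)/sinc(k·Δx/2). Then for every x ∈ ℝ: (û(x + Δx/2) − û(x − Δx/2))/Δx = i·k·exp(i·k·x). -/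
open Complex

/-- The unnormalized sinc function: `sinc t = sin t / t` for `t ≠ 0`, `sinc 0 = 1`. -/
noncomputable def sinc (t : ℝ) : ℝ := if t = 0 then 1 else Real.sin t / t

theorem stmt_15 (Δx k : ℝ) (hΔx : 0 < Δx) (hk : |k * Δx| < 2 * Real.pi)
    (uhat : ℝ → ℂ)
    (huhat : ∀ x : ℝ,
      uhat x = Complex.exp (Complex.I * ((k * x : ℝ) : ℂ)) / ((sinc (k * Δx / 2) : ℝ) : ℂ)) :
    ∀ x : ℝ,
      (uhat (x + Δx / 2) - uhat (x - Δx / 2)) / ((Δx : ℝ) : ℂ)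
        = Complex.I * ((k : ℝ) : ℂ) * Complex.exp (Complex.I * ((k * x : ℝ) : ℂ)) := by
  intro x
  have hΔ : (Δx : ℂ) ≠ 0 := by exact_mod_cast hΔx.ne'
  rw [huhat, huhat]
  by_cases hk0 : k = 0
  · subst hk0
    simp
  have ht : k * Δx / 2 ≠ 0 := div_ne_zero (mul_ne_zero hk0 hΔx.ne') two_ne_zero
  have hs : Real.sin (k * Δx / 2) ≠ 0 := by
    obtain ⟨h1, h2⟩ := abs_lt.mp hk
    intro h
    exact ht ((Real.sin_eq_zero_iff_of_lt_of_lt (by linarith) (by linarith)).mp h)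
  have hsC : ((Real.sin (k * Δx / 2) : ℝ) : ℂ) ≠ 0 := by exact_mod_cast hs
  have hkC : (k : ℂ) ≠ 0 := by exact_mod_cast hk0
  have e1 : Complex.exp (Complex.I * ((k * (x + Δx / 2) : ℝ) : ℂ))
      = Complex.exp (Complex.I * ((k * x : ℝ) : ℂ))
        * (Complex.cos ((k * Δx / 2 : ℝ) : ℂ) + Complex.sin ((k * Δx / 2 : ℝ) : ℂ) * Complex.I) := by
    rw [← Complex.exp_mul_I, ← Complex.exp_add]
    congr 1
    push_cast
    ring
  have e2 : Complex.exp (Complex.I * ((k * (x - Δx / 2) : ℝ) : ℂ))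
      = Complex.exp (Complex.I * ((k * x : ℝ) : ℂ))
        * (Complex.cos ((k * Δx / 2 : ℝ) : ℂ) - Complex.sin ((k * Δx / 2 : ℝ) : ℂ) * Complex.I) := by
    have h := Complex.exp_mul_I (-((k * Δx / 2 : ℝ) : ℂ))
    rw [Complex.cos_neg, Complex.sin_neg, neg_mul, neg_mul, ← sub_eq_add_neg] at h
    rw [← h, ← Complex.exp_add]
    congr 1
    push_cast
    ring
  have e3 : ((sinc (k * Δx / 2) : ℝ) : ℂ)
      = ((Real.sin (k * Δx / 2) : ℝ) : ℂ) / ((k : ℂ) * Δx / 2) := by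
    simp only [sinc, if_neg ht]
    push_cast
    rfl
  rw [e1, e2, e3, ← Complex.ofReal_sin]
  generalize ((Real.sin (k * Δx / 2) : ℝ) : ℂ) = S at *
  field_simp
  ring
end

section
/- Let Δx, Δt > 0, v ∈ ℝ, and set a = v·Δt/Δx. Let ξ ∈ (−π, π), let s ≥ 1 and b, c : Fin s → ℝ. Define sinc(t) = sin(t)/t for t ≠ 0 and sinc(0) = 1, and for each ℓ define Ĝ_ℓ : ℝ → ℂ by Ĝ_ℓ(x) = exp(i·ξ·x/Δx)·exp(−i·c_ℓ·a·ξ)/sinc(ξ/2). Then for every j ∈ ℤ, with x_j = j·Δx and u_j = exp(i·j·ξ): u_j − (Δt/Δx)·Σ_ℓ b_ℓ·v·(Ĝ_ℓ(x_j + Δx/2) − Ĝ_ℓ(x_j − Δx/2)) = ρ(ξ)·u_j, where ρ(ξ) = 1 − i·ξ·a·Σ_ℓ b_ℓ·exp(−i·c_ℓ·a·ξ). -/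
open Finset Complex

theorem stmt_16 (Δx Δt v : ℝ) (hΔx : 0 < Δx) (hΔt : 0 < Δt)
    (a : ℝ) (ha : a = v * Δt / Δx)
    (ξ : ℝ) (hξ : ξ ∈ Set.Ioo (-Real.pi) Real.pi)
    (s : ℕ) (hs : 1 ≤ s) (b c : Fin s → ℝ)
    (G : Fin s → ℝ → ℂ)
    (hG : ∀ (ℓ : Fin s) (x : ℝ),
      G ℓ x = Complex.exp (Complex.I * ((ξ * x / Δx : ℝ) : ℂ))
          * Complex.exp (-(Complex.I * ((c ℓ * a * ξ : ℝ) : ℂ)))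
          / ((sinc (ξ / 2) : ℝ) : ℂ))
    (ρ : ℂ)
    (hρ : ρ = 1 - Complex.I * (ξ : ℂ) * (a : ℂ) *
        ∑ ℓ : Fin s, (b ℓ : ℂ) * Complex.exp (-(Complex.I * ((c ℓ * a * ξ : ℝ) : ℂ)))) :
    ∀ j : ℤ,
      Complex.exp (Complex.I * (((j : ℝ) * ξ : ℝ) : ℂ))
        - ((Δt / Δx : ℝ) : ℂ) *
            ∑ ℓ : Fin s, (b ℓ : ℂ) * (v : ℂ) *
              (G ℓ ((j : ℝ) * Δx + Δx / 2) - G ℓ ((j : ℝ) * Δx - Δx / 2))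
        = ρ * Complex.exp (Complex.I * (((j : ℝ) * ξ : ℝ) : ℂ)) := by
  intro j
  have hΔ : Δx ≠ 0 := hΔx.ne'
  have e1 : ξ * ((j : ℝ) * Δx + Δx / 2) / Δx = (j : ℝ) * ξ + ξ / 2 := by
    field_simp
  have e2 : ξ * ((j : ℝ) * Δx - Δx / 2) / Δx = (j : ℝ) * ξ - ξ / 2 := by
    field_simp
  have key : (Complex.exp (Complex.I * (((ξ / 2 : ℝ)) : ℂ))
      - Complex.exp (-(Complex.I * ((ξ / 2 : ℝ) : ℂ)))) / ((sinc (ξ / 2) : ℝ) : ℂ)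
      = Complex.I * (ξ : ℂ) := by
    by_cases h0 : ξ = 0
    · subst h0
      simp
    · have h2 : ξ / 2 ≠ 0 := by
        intro h
        apply h0
        linarith
      have hs0 : Real.sin (ξ / 2) ≠ 0 := by
        intro h
        apply h2
        exact (Real.sin_eq_zero_iff_of_lt_of_lt (by linarith [hξ.1, Real.pi_pos])
          (by linarith [hξ.2, Real.pi_pos])).1 h
      have hne : ((sinc (ξ / 2) : ℝ) : ℂ) ≠ 0 := by
        rw [Complex.ofReal_ne_zero, sinc, if_neg h2]
        exact div_ne_zero hs0 h2
      have hsin : Real.sin (ξ / 2) = (ξ / 2) * sinc (ξ / 2) := by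
        rw [sinc, if_neg h2]
        field_simp
      have hexp : Complex.exp (Complex.I * (((ξ / 2 : ℝ)) : ℂ))
          - Complex.exp (-(Complex.I * ((ξ / 2 : ℝ) : ℂ)))
          = 2 * Complex.I * ((Real.sin (ξ / 2) : ℝ) : ℂ) := by
        rw [show Complex.I * (((ξ / 2 : ℝ)) : ℂ) = ((ξ / 2 : ℝ) : ℂ) * Complex.I by ring,
          ← neg_mul, Complex.exp_mul_I, Complex.exp_mul_I, Complex.cos_neg, Complex.sin_neg,
          Complex.ofReal_sin]
        ring
      rw [hexp, hsin, div_eq_iff hne]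
      push_cast
      ring
  have hd : ∀ ℓ : Fin s, G ℓ ((j : ℝ) * Δx + Δx / 2) - G ℓ ((j : ℝ) * Δx - Δx / 2)
      = Complex.exp (Complex.I * (((j : ℝ) * ξ : ℝ) : ℂ))
        * Complex.exp (-(Complex.I * ((c ℓ * a * ξ : ℝ) : ℂ))) * (Complex.I * (ξ : ℂ)) := by
    intro ℓ
    rw [hG, hG, e1, e2, ← key, Complex.ofReal_add, Complex.ofReal_sub, mul_add, mul_sub,
      Complex.exp_add, sub_eq_add_neg (Complex.I * _), Complex.exp_add]
    ring
  have ha' : (a : ℂ) = (v : ℂ) * ((Δt / Δx : ℝ) : ℂ) := by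
    rw [ha, mul_div_assoc, Complex.ofReal_mul]
  rw [hρ, sub_mul, one_mul, Finset.mul_sum, Finset.mul_sum, Finset.sum_mul]
  congr 1
  apply Finset.sum_congr rfl
  intro ℓ _
  rw [hd]
  linear_combination (-(Complex.I * (ξ : ℂ) * (b ℓ : ℂ)
    * Complex.exp (-(Complex.I * ((c ℓ * a * ξ : ℝ) : ℂ)))
    * Complex.exp (Complex.I * (((j : ℝ) * ξ : ℝ) : ℂ)))) * ha'
end

section
/- Let γ ∈ ℝ with 1 − √2/2 < γ < 1/3. Define γ_2 = (6γ² − 6γ + 1)/(3·(2γ² − 4γ + 1)), q_1 = 2γ + γ_2, and q_2 = 2γ·γ_2 + γ². Then 8·q_1 − 12·q_2 − 3 ≥ 0; equivalently, γ_2 ≥ (3 − 16γ + 12γ²)/(8 − 24γ). (Note that 2γ² − 4γ + 1 ≠ 0 and 8 − 24γ > 0 on this interval.) -/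
theorem stmt_17 (γ : ℝ) (h₁ : 1 - Real.sqrt 2 / 2 < γ) (h₂ : γ < 1 / 3)
    (γ₂ q₁ q₂ : ℝ)
    (hγ₂ : γ₂ = (6 * γ ^ 2 - 6 * γ + 1) / (3 * (2 * γ ^ 2 - 4 * γ + 1)))
    (hq₁ : q₁ = 2 * γ + γ₂) (hq₂ : q₂ = 2 * γ * γ₂ + γ ^ 2) :
    (0 ≤ 8 * q₁ - 12 * q₂ - 3) ∧
    ((3 - 16 * γ + 12 * γ ^ 2) / (8 - 24 * γ) ≤ γ₂) ∧
    (2 * γ ^ 2 - 4 * γ + 1 ≠ 0) ∧ (0 < 8 - 24 * γ) := by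
  have hs : Real.sqrt 2 ^ 2 = 2 := Real.sq_sqrt (by norm_num)
  have hs0 : 0 ≤ Real.sqrt 2 := Real.sqrt_nonneg 2
  have hD : 2 * γ ^ 2 - 4 * γ + 1 < 0 := by nlinarith
  have h8 : 0 < 8 - 24 * γ := by linarith
  have key : 0 ≤ γ₂ * (8 - 24 * γ) - (3 - 16 * γ + 12 * γ ^ 2) := by
    have e : γ₂ * (8 - 24 * γ) - (3 - 16 * γ + 12 * γ ^ 2)
        = ((8 * γ ^ 2 - 6 * γ + 1) ^ 2 + 8 * γ ^ 4 + 2 * γ ^ 2)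
          / (3 * -(2 * γ ^ 2 - 4 * γ + 1)) := by
      have hne := hD.ne
      have hm : γ₂ * (3 * (2 * γ ^ 2 - 4 * γ + 1)) = 6 * γ ^ 2 - 6 * γ + 1 := by
        rw [hγ₂]
        exact div_mul_cancel₀ _ (mul_ne_zero (by norm_num) hne)
      rw [eq_div_iff (mul_ne_zero (by norm_num) (neg_ne_zero.mpr hne))]
      linear_combination (-(8 - 24 * γ)) * hm
    rw [e]
    have : 0 < -(2 * γ ^ 2 - 4 * γ + 1) := by linarith
    positivity
  refine ⟨?_, ?_, hD.ne, h8⟩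
  · subst hq₁ hq₂
    linarith
  · rw [div_le_iff₀ h8]
    linarith
end

section
/- Let γ ∈ ℝ with 2γ² − 4γ + 1 ≠ 0 and 3γ³ − 9γ² + 6γ − 1 ≠ 0. Define b_2 = −(3/4)·(2γ² − 4γ + 1)²/(3γ³ − 9γ² + 6γ − 1), c_2 = (6γ² − 9γ + 2)/(3·(2γ² − 4γ + 1)), γ_2 = (6γ² − 6γ + 1)/(3·(2γ² − 4γ + 1)), b_1 = 1 − b_2 − γ, and consider the 3-stage Butcher tableau with abscissae c = (γ, c_2, 1), weights b = (b_1, b_2, γ), and matrix A with rows (γ, 0, 0), (c_2 − γ_2, γ_2, 0), (b_1, b_2, γ). Then the third-order conditions hold: Σ_{i=1}^3 b_i = 1, Σ_{i=1}^3 b_i·c_i = 1/2, Σ_{i=1}^3 b_i·c_i² = 1/3, and Σ_{i,j=1}^3 b_i·a_{ij}·c_j = 1/6. -/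
open Finset

theorem stmt_18 (γ : ℝ) (h₁ : 2 * γ ^ 2 - 4 * γ + 1 ≠ 0)
    (h₂ : 3 * γ ^ 3 - 9 * γ ^ 2 + 6 * γ - 1 ≠ 0)
    (b₁ b₂ c₂ γ₂ : ℝ)
    (hb₂ : b₂ = -(3 / 4) * (2 * γ ^ 2 - 4 * γ + 1) ^ 2 / (3 * γ ^ 3 - 9 * γ ^ 2 + 6 * γ - 1))
    (hc₂ : c₂ = (6 * γ ^ 2 - 9 * γ + 2) / (3 * (2 * γ ^ 2 - 4 * γ + 1)))
    (hγ₂ : γ₂ = (6 * γ ^ 2 - 6 * γ + 1) / (3 * (2 * γ ^ 2 - 4 * γ + 1)))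
    (hb₁ : b₁ = 1 - b₂ - γ)
    (c : Fin 3 → ℝ) (hc : c = ![γ, c₂, 1])
    (b : Fin 3 → ℝ) (hb : b = ![b₁, b₂, γ])
    (A : Fin 3 → Fin 3 → ℝ)
    (hA : A = ![![γ, 0, 0], ![c₂ - γ₂, γ₂, 0], ![b₁, b₂, γ]]) :
    (∑ i : Fin 3, b i = 1) ∧
    (∑ i : Fin 3, b i * c i = 1 / 2) ∧
    (∑ i : Fin 3, b i * c i ^ 2 = 1 / 3) ∧
    (∑ i : Fin 3, ∑ j : Fin 3, b i * A i j * c j = 1 / 6) := by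
  have hK : b₂ * (c₂ - γ) = (2 * γ ^ 2 - 4 * γ + 1) / 2 := by
    have e : c₂ - γ = -2 * (3 * γ ^ 3 - 9 * γ ^ 2 + 6 * γ - 1) /
        (3 * (2 * γ ^ 2 - 4 * γ + 1)) := by
      rw [hc₂, eq_div_iff (by simpa using h₁), sub_mul, div_mul_cancel₀ _ (by simpa using h₁)]
      ring
    rw [e, hb₂]
    generalize 2 * γ ^ 2 - 4 * γ + 1 = p at *
    generalize 3 * γ ^ 3 - 9 * γ ^ 2 + 6 * γ - 1 = q at *
    field_simp
    norm_num
  have hC : c₂ * (3 * (2 * γ ^ 2 - 4 * γ + 1)) = 6 * γ ^ 2 - 9 * γ + 2 := by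
    rw [hc₂, div_mul_cancel₀ _ (by simpa using h₁)]
  have hG : γ₂ * (3 * (2 * γ ^ 2 - 4 * γ + 1)) = 6 * γ ^ 2 - 6 * γ + 1 := by
    rw [hγ₂, div_mul_cancel₀ _ (by simpa using h₁)]
  clear hb₂ hc₂ hγ₂
  subst hc hb hA hb₁
  simp only [Fin.sum_univ_three, Matrix.cons_val]
  refine ⟨by ring, ?_, ?_, ?_⟩
  · linear_combination hK
  · linear_combination (c₂ + γ) * hK + hC / 6
  · linear_combination (γ₂ + 2 * γ) * hK + hG / 6
end
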